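/- arXiv:2303.02712 — 3 statements merged into one kernel-verified Lean document; each statement's English description precedes it below -/
import Mathlib

section
/- Let n be a natural number and define, for each s : Fin n → Fin 4, the n-qubit Pauli string matrix P_s : Matrix (Fin n → Fin 2) (Fin n → Fin 2) ℂ by (P_s) x y = ∏_{i : Fin n} (σ_{s i}) (x i) (y i), where σ_0 = 1 (the 2×2 identity), σ_1 = !![0,1;1,0], σ_2 = !![0,−I;I,0], σ_3 = !![1,0;0,−1] are the Pauli matrices over ℂ. Then for every matrix ρ : Matrix (Fin n → Fin 2) (Fin n → Fin 2) ℂ, ∑_{s : Fin n → Fin 4} P_s * ρ * P_s = (2^n · trace ρ) • 1. -/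
/-!
The `(x, y)` entry of `∑ s, P_s ρ P_s` is `∑ a b, ρ a b * ∑ s, P_s x a * P_s b y`. The inner sum
factors over the qubits, and on one qubit `∑ k, σ_k x a * σ_k b y = 2 δ_{xy} δ_{ab}`
(`pauli_completeness`). Hence it equals `2 ^ n δ_{xy} δ_{ab}` (`pauliString_completeness`), and
summing against `ρ a b` leaves `2 ^ n * trace ρ` on the diagonal and `0` elsewhere.
-/

open Matrix

/-- The single-qubit Pauli matrices `σ_0 = 1`, `σ_1 = X`, `σ_2 = Y`, `σ_3 = Z`. -/
noncomputable def pauli : Fin 4 → Matrix (Fin 2) (Fin 2) ℂ :=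
  ![1, !![0, 1; 1, 0], !![0, -Complex.I; Complex.I, 0], !![1, 0; 0, -1]]

/-- The `n`-qubit Pauli string matrix `P_s` for `s : Fin n → Fin 4`, with entries
`(P_s) x y = ∏ i, (σ_{s i}) (x i) (y i)` (the `n`-fold Kronecker product of the
single-qubit Pauli matrices, realised entrywise). -/
noncomputable def PauliString (n : ℕ) (s : Fin n → Fin 4) :
    Matrix (Fin n → Fin 2) (Fin n → Fin 2) ℂ :=
  Matrix.of fun x y => ∏ i : Fin n, pauli (s i) (x i) (y i)

/-- Completeness of the single-qubit Pauli basis: `∑ k, σ_k ⊗ σ_k` is twice the swap operator. -/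
lemma pauli_completeness (x a b y : Fin 2) :
    ∑ k : Fin 4, pauli k x a * pauli k b y = if x = y ∧ a = b then 2 else 0 := by
  fin_cases x <;> fin_cases a <;> fin_cases b <;> fin_cases y <;>
    simp [pauli, Fin.sum_univ_four] <;> norm_num

/-- Completeness of the `n`-qubit Pauli strings. Since the summand is a product over qubits, the
sum over strings factors into single-qubit sums. -/
lemma pauliString_completeness (n : ℕ) (x a b y : Fin n → Fin 2) :
    ∑ s : Fin n → Fin 4, PauliString n s x a * PauliString n s b y
      = if x = y ∧ a = b then (2 : ℂ) ^ n else 0 := by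
  simp only [PauliString, Matrix.of_apply, ← Finset.prod_mul_distrib]
  rw [← Fintype.prod_sum fun i k => pauli k (x i) (a i) * pauli k (b i) (y i)]
  simp only [pauli_completeness]
  split_ifs with h
  · simp [h.1, h.2]
  · obtain ⟨i, hi⟩ : ∃ i, ¬ (x i = y i ∧ a i = b i) := by
      by_contra! hc
      exact h ⟨funext fun i => (hc i).1, funext fun i => (hc i).2⟩
    exact Finset.prod_eq_zero (Finset.mem_univ i) (if_neg hi)

/-- Pauli twirl identity: summing the conjugates of any `ρ` by all `4^n` Pauli
strings gives `(2^n * trace ρ) • 1`. -/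
theorem pauli_twirl (n : ℕ) (ρ : Matrix (Fin n → Fin 2) (Fin n → Fin 2) ℂ) :
    ∑ s : Fin n → Fin 4, PauliString n s * ρ * PauliString n s
      = ((2 ^ n : ℂ) * ρ.trace) • (1 : Matrix (Fin n → Fin 2) (Fin n → Fin 2) ℂ) := by
  ext x y
  calc (∑ s : Fin n → Fin 4, PauliString n s * ρ * PauliString n s) x y
      = ∑ b, ∑ a, ρ a b * ∑ s, PauliString n s x a * PauliString n s b y := by
        simp only [Matrix.sum_apply, Matrix.mul_apply, Finset.sum_mul, Finset.mul_sum]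
        rw [Finset.sum_comm]
        refine Finset.sum_congr rfl fun b _ => ?_
        rw [Finset.sum_comm]
        exact Finset.sum_congr rfl fun a _ => Finset.sum_congr rfl fun s _ => by ring
    _ = (((2 ^ n : ℂ) * ρ.trace) • (1 : Matrix (Fin n → Fin 2) (Fin n → Fin 2) ℂ)) x y := by
        simp only [pauliString_completeness]
        by_cases h : x = y
        · simp [h, Matrix.trace, Finset.mul_sum, mul_comm]
        · simp [h]
end

section
/- Let n be a natural number and η a complex number, and let P_s (for s : Fin n → Fin 4) be the n-qubit Pauli string matrices as above. For every ρ : Matrix (Fin n → Fin 2) (Fin n → Fin 2) ℂ with trace ρ = 1, the stochastic Pauli channel whose identity coefficient is 1 − (4^n − 1)·η and whose coefficient on every non-identity Pauli string is η is a global depolarizing channel: (1 − (4^n − 1)·η) • ρ + η • (∑_{s ≠ (fun _ => 0)} P_s * ρ * P_s) = (1 − λ) • ρ + (λ/2^n) • 1, where λ = 4^n · η. -/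
/-!
The proof rests on the Pauli twirl: summing `P_s ρ P_s` over all `4 ^ n` strings, the identity
included, gives `2 ^ n * tr ρ` times the identity matrix. Entrywise this is the completeness
relation `∑ₛ (P_s) x u (P_s) v y = 2 ^ n δ_{xy} δ_{uv}`, which factors over the qubits, because a
sum over strings of a product over positions is a product over positions of sums over single
letters, and so reduces to the `2 × 2` case. The depolarizing form follows by moving the identity
term, `ρ`, out of the full sum and using `4 ^ n = 2 ^ n * 2 ^ n`.
-/

open Matrix

/-- Completeness relation for the single-qubit Pauli matrices. -/
lemma sum_pauli_mul_pauli (x u v y : Fin 2) :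
    ∑ a, pauli a x u * pauli a v y = if x = y ∧ u = v then 2 else 0 := by
  fin_cases x <;> fin_cases u <;> fin_cases v <;> fin_cases y <;>
    simp [Fin.sum_univ_four, pauli] <;> norm_num

/-- Completeness relation for the Pauli strings. -/
lemma sum_pauliString_mul_pauliString (n : ℕ) (x u v y : Fin n → Fin 2) :
    ∑ s, PauliString n s x u * PauliString n s v y = if x = y ∧ u = v then 2 ^ n else 0 := by
  simp only [PauliString, Matrix.of_apply, ← Finset.prod_mul_distrib]
  have h := Finset.prod_univ_sum (fun _ : Fin n => (Finset.univ : Finset (Fin 4)))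
    (fun i a => pauli a (x i) (u i) * pauli a (v i) (y i))
  rw [Fintype.piFinset_univ] at h
  rw [← h]
  simp only [sum_pauli_mul_pauli]
  split_ifs with hxy
  · obtain ⟨rfl, rfl⟩ := hxy
    simp
  · have hex : ∃ i, ¬ (x i = y i ∧ u i = v i) := by
      by_contra! hall
      exact hxy ⟨funext fun i => (hall i).1, funext fun i => (hall i).2⟩
    obtain ⟨i, hi⟩ := hex
    exact Finset.prod_eq_zero (Finset.mem_univ i) (if_neg hi)

lemma pauliString_zero (n : ℕ) : PauliString n (fun _ => 0) = 1 := by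
  ext x y
  simp [PauliString, pauli, Matrix.one_apply, Finset.prod_ite_zero, funext_iff]

/-- The Pauli twirl over all strings, the identity included, is completely depolarizing. -/
lemma sum_pauliString_conj (n : ℕ) (ρ : Matrix (Fin n → Fin 2) (Fin n → Fin 2) ℂ) :
    ∑ s, PauliString n s * ρ * PauliString n s =
      ((2 : ℂ) ^ n * ρ.trace) • (1 : Matrix (Fin n → Fin 2) (Fin n → Fin 2) ℂ) := by
  ext x y
  have h : (∑ s, PauliString n s * ρ * PauliString n s) x y =
      ∑ v, ∑ u, ρ u v * ∑ s, PauliString n s x u * PauliString n s v y := by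
    simp only [Matrix.sum_apply, Matrix.mul_apply, Finset.sum_mul, Finset.mul_sum]
    rw [Finset.sum_comm]
    refine Finset.sum_congr rfl fun v _ => ?_
    rw [Finset.sum_comm]
    refine Finset.sum_congr rfl fun u _ => Finset.sum_congr rfl fun s _ => ?_
    ring
  rw [h]
  simp only [sum_pauliString_mul_pauliString]
  by_cases hxy : x = y
  · simp [hxy, Matrix.trace, ← Finset.sum_mul, mul_comm]
  · simp [hxy]

/-- A stochastic Pauli channel whose coefficient on every non-identity Pauli
string equals a common value `η` (and whose identity coefficient is
`1 - (4^n - 1) η`) is a global depolarizing channel with parameter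
`λ = 4^n * η`: applied to a trace-one `ρ` it gives `(1 - λ) • ρ + (λ / 2^n) • 1`. -/
theorem stochastic_pauli_is_depolarizing (n : ℕ) (η : ℂ)
    (ρ : Matrix (Fin n → Fin 2) (Fin n → Fin 2) ℂ) (hρ : ρ.trace = 1) :
    (1 - ((4 : ℂ) ^ n - 1) * η) • ρ
        + η • ∑ s ∈ Finset.univ.filter (fun s : Fin n → Fin 4 => s ≠ fun _ => 0),
            PauliString n s * ρ * PauliString n s
      = (1 - (4 : ℂ) ^ n * η) • ρ
        + (((4 : ℂ) ^ n * η) / 2 ^ n) •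
            (1 : Matrix (Fin n → Fin 2) (Fin n → Fin 2) ℂ) := by
  have htwirl := sum_pauliString_conj n ρ
  rw [← Finset.add_sum_erase _ _ (Finset.mem_univ (fun _ : Fin n => (0 : Fin 4))),
    pauliString_zero, one_mul, mul_one, hρ, mul_one, ← Finset.filter_ne'] at htwirl
  rw [eq_sub_of_add_eq' htwirl]
  have h4 : (4 : ℂ) ^ n = 2 ^ n * 2 ^ n := by
    rw [← mul_pow]
    norm_num
  have h2 : (4 : ℂ) ^ n * η / 2 ^ n = η * 2 ^ n := by
    rw [h4]
    field_simp
  rw [h2]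
  module
end

section
/- Let p be a prime and let n = 2p. Consider the cyclic group of order p generated by the shift-by-two permutation π : Fin n → Fin n, π(i) = i + 2 (mod n), acting on functions w : Fin n → Bool by precomposition. Then the number N of orbits satisfies n·N = 2^(n+1) + 4n − 8; that is, N = (2^(n+1) + 4n − 8)/n = (2/n)·2^n + (4n−8)/n. -/
/-!
Precomposition with `π` is a self-map `T` of the finite set of support patterns with `T^p = id`.
For such a map with `p` prime, every orbit is either a fixed point or has exactly `p` elements.
Giving weight `p` to each fixed point and weight `1` to every other point, each orbit has total
weight `p`, so `p * #orbits = #points + (p - 1) * #fixed points` (`prime_mul_card_orbits`).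
A pattern fixed by the shift by two is determined by its values on the two parity classes, so
there are `4` of them (`card_fixed_patterns`), and `p * N = 2 ^ n + 4 * (p - 1)`.
-/

/-- The iterates `f^[k] x` with `k < p`; the whole forward orbit of `x` when `f^[p] x = x`. -/
def orbitFinset {X : Type*} [DecidableEq X] (f : X → X) (p : ℕ) (x : X) : Finset X :=
  Finset.univ.image (fun k : Fin p => f^[(k : ℕ)] x)

section Orbits

variable {X : Type*} [DecidableEq X] {f : X → X} {p : ℕ}

lemma mem_orbitFinset (hp : 0 < p) (hf : ∀ x, f^[p] x = x) (x y : X) :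
    y ∈ orbitFinset f p x ↔ ∃ k : ℕ, f^[k] x = y := by
  simp only [orbitFinset, Finset.mem_image, Finset.mem_univ, true_and]
  constructor
  · rintro ⟨k, hk⟩
    exact ⟨k, hk⟩
  · rintro ⟨k, hk⟩
    have hx : Function.IsPeriodicPt f p x := hf x
    exact ⟨⟨k % p, Nat.mod_lt _ hp⟩, by simpa [hx.iterate_mod_apply k] using hk⟩

lemma orbitFinset_eq_iff (hp : 0 < p) (hf : ∀ x, f^[p] x = x) (x y : X) :
    orbitFinset f p x = orbitFinset f p y ↔ x ∈ orbitFinset f p y := by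
  constructor
  · intro h
    rw [← h, mem_orbitFinset hp hf]
    exact ⟨0, rfl⟩
  · rw [mem_orbitFinset hp hf]
    rintro ⟨k, rfl⟩
    ext z
    rw [mem_orbitFinset hp hf, mem_orbitFinset hp hf]
    constructor
    · rintro ⟨j, rfl⟩
      exact ⟨j + k, Function.iterate_add_apply f j k y⟩
    · rintro ⟨j, rfl⟩
      -- Going `p * k - k` further steps from `f^[k] y` returns to `y`.
      refine ⟨j + (p * k - k), ?_⟩
      have hk : p * k - k + k = p * k := Nat.sub_add_cancel (Nat.le_mul_of_pos_left k hp)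
      have hy : f^[p * k] y = y := Function.IsPeriodicPt.mul_const (show f^[p] y = y from hf y) k
      rw [← Function.iterate_add_apply, add_assoc, hk, Function.iterate_add_apply, hy]

/-- Orbit count for an action of a cyclic group of prime order, in the subtraction-free form
obtained by weighting fixed points by `p` and all other points by `1`. -/
lemma prime_mul_card_orbits [Fintype X] (hp : p.Prime) (hf : ∀ x, f^[p] x = x) :
    p * (Finset.univ.image (orbitFinset f p)).card =
      ∑ x : X, if f x = x then p else 1 := by
  rw [← Finset.sum_fiberwise_of_maps_to (t := Finset.univ.image (orbitFinset f p))
    (g := orbitFinset f p) (fun x _ => Finset.mem_image_of_mem _ (Finset.mem_univ x)),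
    mul_comm, ← smul_eq_mul, ← Finset.sum_const]
  refine Finset.sum_congr rfl fun o ho => ?_
  obtain ⟨y, -, rfl⟩ := Finset.mem_image.1 ho
  have hfib : Finset.univ.filter (fun x => orbitFinset f p x = orbitFinset f p y) =
      orbitFinset f p y := by
    ext x
    simp [orbitFinset_eq_iff hp.pos hf]
  rw [hfib]
  by_cases hy : f y = y
  · have ho : orbitFinset f p y = {y} := by
      ext z
      rw [mem_orbitFinset hp.pos hf, Finset.mem_singleton]
      constructor
      · rintro ⟨k, rfl⟩
        exact Function.iterate_fixed hy k
      · rintro rfl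
        exact ⟨0, rfl⟩
    simp [ho, hy]
  · have hnf : ∀ x ∈ orbitFinset f p y, ¬ f x = x := by
      intro x hx hfx
      have hyx := (orbitFinset_eq_iff hp.pos hf y x).1
        ((orbitFinset_eq_iff hp.pos hf x y).2 hx).symm
      obtain ⟨k, hk⟩ := (mem_orbitFinset hp.pos hf _ _).1 hyx
      rw [Function.iterate_fixed hfx k] at hk
      exact hy (hk ▸ hfx)
    rw [Finset.sum_congr rfl fun x hx => if_neg (hnf x hx)]
    have hmin : Function.minimalPeriod f y = p := by
      have := Fact.mk hp
      exact Function.minimalPeriod_eq_prime (hf y) hy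
    have hinj : Function.Injective (fun k : Fin p => f^[(k : ℕ)] y) := by
      intro a b hab
      apply Fin.ext
      exact Function.iterate_injOn_Iio_minimalPeriod (f := f) (x := y)
        (by simp [hmin]) (by simp [hmin]) hab
    rw [← Finset.card_eq_sum_ones, orbitFinset, Finset.card_image_of_injective _ hinj,
      Finset.card_univ, Fintype.card_fin]

end Orbits

lemma shift_iterate_val {n : ℕ} {π : Fin n → Fin n}
    (hπ : ∀ i : Fin n, (π i : ℕ) = ((i : ℕ) + 2) % n) (k : ℕ) (i : Fin n) :
    (π^[k] i : ℕ) = ((i : ℕ) + 2 * k) % n := by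
  induction k with
  | zero => simp [Nat.mod_eq_of_lt i.isLt]
  | succ k ih =>
    rw [Function.iterate_succ_apply', hπ, ih, Nat.mod_add_mod]
    congr 1

lemma precomp_iterate {α β : Type*} (π : α → α) (k : ℕ) (w : α → β) :
    (fun v : α → β => v ∘ π)^[k] w = w ∘ π^[k] := by
  induction k with
  | zero => rfl
  | succ k ih => rw [Function.iterate_succ_apply', ih, Function.iterate_succ]; rfl

/-- The patterns fixed by the shift by two are exactly the functions of the parity of the
position; they biject with functions `Fin 2 → Bool`. -/
lemma card_fixed_patterns {n p : ℕ} (hp : 0 < p) (hn : n = 2 * p) {π : Fin n → Fin n}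
    (hπ : ∀ i : Fin n, (π i : ℕ) = ((i : ℕ) + 2) % n) :
    (Finset.univ.filter (fun w : Fin n → Bool => w ∘ π = w)).card = 4 := by
  have himg : Finset.univ.filter (fun w : Fin n → Bool => w ∘ π = w) =
      Finset.univ.image (fun (c : Fin 2 → Bool) (i : Fin n) =>
        c ⟨(i : ℕ) % 2, Nat.mod_lt _ two_pos⟩) := by
    ext w
    simp only [Finset.mem_filter, Finset.mem_univ, true_and, Finset.mem_image]
    constructor
    · intro hw
      refine ⟨fun r => w ⟨r, by omega⟩, ?_⟩
      funext i
      -- Position `i` is reached from `i % 2` by `i / 2` shifts.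
      have hi : π^[(i : ℕ) / 2] ⟨(i : ℕ) % 2, by omega⟩ = i := by
        apply Fin.ext
        rw [shift_iterate_val hπ]
        simp only [Nat.mod_add_div]
        exact Nat.mod_eq_of_lt i.isLt
      have hfix : w ∘ π^[(i : ℕ) / 2] = w := by
        rw [← precomp_iterate]
        exact Function.iterate_fixed hw _
      conv_rhs => rw [← hi]
      exact (congrFun hfix _).symm
    · rintro ⟨c, rfl⟩
      funext i
      simp only [Function.comp_apply]
      congr 1
      apply Fin.ext
      simp only [hπ]
      rw [Nat.mod_mod_of_dvd _ (hn ▸ dvd_mul_right 2 p), Nat.add_mod_right]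
  rw [himg, Finset.card_image_of_injective]
  · simp
  · intro c d hcd
    funext r
    have h := congrFun hcd ⟨r, by omega⟩
    simpa [Nat.mod_eq_of_lt r.isLt] using h

/-- For `n = 2 p` with `p` prime, the number `N` of orbits of the cyclic group of
order `p` generated by the shift-by-two permutation `π i = (i + 2) mod n`, acting
on support patterns `w : Fin n → Bool` by precomposition, satisfies
`n * N = 2^(n+1) + 4 n - 8`, i.e. `N = (2/n) * 2^n + (4n - 8)/n`. -/
theorem rotation_orbit_count_bool (p : ℕ) (hp : p.Prime) (n : ℕ) (hn : n = 2 * p)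
    (π : Fin n → Fin n) (hπ : ∀ i : Fin n, (π i : ℕ) = ((i : ℕ) + 2) % n) (N : ℕ)
    (hN : N = (Finset.univ.image
        (fun w : Fin n → Bool =>
          Finset.univ.image (fun k : Fin p => w ∘ π^[(k : ℕ)]))).card) :
    n * N = 2 ^ (n + 1) + 4 * n - 8 := by
  have hT : ∀ w : Fin n → Bool, (fun v : Fin n → Bool => v ∘ π)^[p] w = w := by
    intro w
    rw [precomp_iterate]
    funext i
    refine congrArg w (Fin.ext ?_)
    rw [shift_iterate_val hπ, ← hn, Nat.add_mod_right, Nat.mod_eq_of_lt i.isLt]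
  have horb : (fun w : Fin n → Bool =>
      Finset.univ.image (fun k : Fin p => w ∘ π^[(k : ℕ)])) =
      orbitFinset (fun v : Fin n → Bool => v ∘ π) p := by
    funext w
    simp only [orbitFinset, precomp_iterate]
  have hcount := prime_mul_card_orbits hp hT
  rw [← horb, ← hN] at hcount
  have hfixed := card_fixed_patterns hp.pos hn hπ
  have hsplit := Finset.card_filter_add_card_filter_not (s := Finset.univ)
    (fun w : Fin n → Bool => w ∘ π = w)
  rw [Finset.sum_ite, Finset.sum_const, Finset.sum_const, hfixed, smul_eq_mul,
    smul_eq_mul] at hcount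
  rw [hfixed, Finset.card_univ, Fintype.card_fun, Fintype.card_bool, Fintype.card_fin] at hsplit
  have hnN : n * N = 2 * (p * N) := by rw [hn, mul_assoc]
  rw [hnN, hcount, pow_succ]
  omega
end
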